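/- arXiv:1502.02529 — 5 statements merged into one kernel-verified Lean document; each statement's English description precedes it below -/
import Mathlib

section
/- Let ω ∈ ℝ with 4ω − 1 ≠ 0, 3ω − 1 ≠ 0, ω ≠ 1, and D(ω) ≥ 0, where D(ω) = (ω−1)²(4ω−1)² + 12(4ω−1)(ω−1/3)². Define, for either choice of sign ±: b₃ = ω, b₁^± = (1−ω)/2 ∓ √(D(ω))/(2(4ω−1)), a₂ = (4ω−1)/(2(3ω−1)), a₃^± = (1/2 − b₁^±·a₂)/(1−ω), a₁^± = 1 − a₂ − a₃^±, and b₂^± = 1 − b₁^± − ω. Then the six numbers (a₁^±, a₂, a₃^±, b₁^±, b₂^±, b₃) satisfy all five of the third-order splitting conditions for p = 3: a₁+a₂+a₃ = 1, b₁+b₂+b₃ = 1, a₂b₁ + a₃(b₁+b₂) = 1/2, a₂b₁² + a₃(b₁+b₂)² = 1/3, and b₁a₁² + b₂(a₁+a₂)² + b₃ = 1/3. -/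
open Real

/-- The two branches (`σ = 1` and `σ = −1`) of the explicit parametrization of
third-order `p = 3` splitting coefficients by the free parameter `ω = b₃`
satisfy all five third-order splitting conditions. -/
theorem thirdOrder_splitting_parametrization (ω σ : ℝ)
    (hσ : σ = 1 ∨ σ = -1)
    (h4 : 4 * ω - 1 ≠ 0) (h3 : 3 * ω - 1 ≠ 0) (h1 : ω ≠ 1)
    (hD : 0 ≤ (ω - 1) ^ 2 * (4 * ω - 1) ^ 2 +
        12 * (4 * ω - 1) * (ω - 1 / 3) ^ 2) :
    let D : ℝ := (ω - 1) ^ 2 * (4 * ω - 1) ^ 2 +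
      12 * (4 * ω - 1) * (ω - 1 / 3) ^ 2
    let b₃ : ℝ := ω
    let b₁ : ℝ := (1 - ω) / 2 - σ * Real.sqrt D / (2 * (4 * ω - 1))
    let a₂ : ℝ := (4 * ω - 1) / (2 * (3 * ω - 1))
    let a₃ : ℝ := (1 / 2 - b₁ * a₂) / (1 - ω)
    let a₁ : ℝ := 1 - a₂ - a₃
    let b₂ : ℝ := 1 - b₁ - ω
    a₁ + a₂ + a₃ = 1 ∧ b₁ + b₂ + b₃ = 1 ∧
    a₂ * b₁ + a₃ * (b₁ + b₂) = 1 / 2 ∧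
    a₂ * b₁ ^ 2 + a₃ * (b₁ + b₂) ^ 2 = 1 / 3 ∧
    b₁ * a₁ ^ 2 + b₂ * (a₁ + a₂) ^ 2 + b₃ = 1 / 3 := by
  intro D b₃ b₁ a₂ a₃ a₁ b₂
  have hs : Real.sqrt D ^ 2 = D := Real.sq_sqrt hD
  have hσ2 : σ ^ 2 = 1 := by rcases hσ with h | h <;> rw [h] <;> norm_num
  have hu : 1 - ω ≠ 0 := fun h => h1 (by linarith)
  have hT : (2 * (4 * ω - 1)) * (b₁ - (1 - ω) / 2) = - (σ * Real.sqrt D) := by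
    simp only [b₁]
    generalize Real.sqrt D = s
    field_simp
    ring
  have hA : a₂ * (2 * (3 * ω - 1)) = 4 * ω - 1 := by
    simp only [a₂]
    exact div_mul_cancel₀ _ (mul_ne_zero two_ne_zero h3)
  have hY : a₃ * (1 - ω) = 1 / 2 - b₁ * a₂ := by
    simp only [a₃]
    exact div_mul_cancel₀ _ hu
  have hT2 : ((2 * (4 * ω - 1)) * (b₁ - (1 - ω) / 2)) ^ 2 =
      (ω - 1) ^ 2 * (4 * ω - 1) ^ 2 + 12 * (4 * ω - 1) * (ω - 1 / 3) ^ 2 := by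
    rw [hT, neg_sq, mul_pow, hσ2, hs, one_mul]
  have ha1 : a₁ = 1 - a₂ - a₃ := rfl
  have hb2 : b₂ = 1 - b₁ - ω := rfl
  have hb3 : b₃ = ω := rfl
  clear_value a₁ b₂ b₃ a₃ a₂ b₁
  subst ha1 hb2 hb3
  have hE : 3 * (4 * b₃ - 1) * (b₁ ^ 2 - (1 - b₃) * b₁) = (3 * b₃ - 1) ^ 2 := by
    apply mul_left_cancel₀ h4
    linear_combination (3 / 4) * hT2
  have hF : a₂ * (b₁ ^ 2 - (1 - b₃) * b₁) = (3 * b₃ - 1) / 6 := by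
    apply mul_left_cancel₀ (mul_ne_zero h4 h3)
    linear_combination (4 * b₃ - 1) * (b₁ ^ 2 - (1 - b₃) * b₁) / 2 * hA
      + (4 * b₃ - 1) / 6 * hE
  have hG : a₂ ^ 2 * (b₁ ^ 2 - (1 - b₃) * b₁) = (4 * b₃ - 1) / 12 := by
    linear_combination a₂ * hF + hA / 12
  refine ⟨by ring, by ring, by linear_combination hY, ?_, ?_⟩
  · linear_combination (1 - b₃) * hY + hF
  · apply mul_left_cancel₀ hu
    have hz : b₁ * a₂ = 1 / 2 - a₃ * (1 - b₃) := by linarith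
    have h5 : b₁ * (1 - a₂ - a₃) ^ 2 + (1 - b₁ - b₃) * (1 - a₂ - a₃ + a₂) ^ 2 + b₃
        = -(1 - b₃) * a₃ ^ 2 + a₃ + a₂ / 2 - a₂ * a₃ * (1 - b₃) := by
      linear_combination (a₂ - 2 * (1 - a₃)) * hz
    rw [h5]
    linear_combination (1 - a₃ * (1 - b₃) - (1 / 2 - b₁ * a₂) - a₂ * (1 - b₃)) * hY - hG
end

section
/- Define D(ω) = (ω−1)²(4ω−1)² + 12(4ω−1)(ω−1/3)² and the cubic P(ω) = (ω−1)²(4ω−1) + 12(ω−1/3)², so that D(ω) = (4ω−1)·P(ω). Then: (i) D(ω) ≥ 0 for all ω ≥ 1/4; (ii) P has exactly one real root ω*, and ω* ∈ (−1.22, −1.21); (iii) for ω < 1/4, D(ω) ≥ 0 if and only if ω ≤ ω*. Consequently D(ω) ≥ 0 precisely when ω ≥ 1/4 or ω ≤ ω*. -/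
/-- Sign analysis of the discriminant
`D(ω) = (ω−1)²(4ω−1)² + 12(4ω−1)(ω−1/3)² = (4ω−1)·P(ω)` with
`P(ω) = (ω−1)²(4ω−1) + 12(ω−1/3)²`: `D ≥ 0` on `[1/4, ∞)`, the cubic `P` has
a unique real root `ω* ∈ (−1.22, −1.21)`, for `ω < 1/4` one has `D(ω) ≥ 0`
iff `ω ≤ ω*`, and consequently `D(ω) ≥ 0` iff `ω ≥ 1/4` or `ω ≤ ω*`. -/
theorem discriminant_sign_analysis :
    let D : ℝ → ℝ := fun ω =>
      (ω - 1) ^ 2 * (4 * ω - 1) ^ 2 + 12 * (4 * ω - 1) * (ω - 1 / 3) ^ 2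
    let P : ℝ → ℝ := fun ω =>
      (ω - 1) ^ 2 * (4 * ω - 1) + 12 * (ω - 1 / 3) ^ 2
    (∀ ω : ℝ, D ω = (4 * ω - 1) * P ω) ∧
    (∀ ω : ℝ, 1 / 4 ≤ ω → 0 ≤ D ω) ∧
    ∃ ωstar : ℝ,
      (∀ ω : ℝ, P ω = 0 ↔ ω = ωstar) ∧
      (-1.22 < ωstar ∧ ωstar < -1.21) ∧
      (∀ ω : ℝ, ω < 1 / 4 → (0 ≤ D ω ↔ ω ≤ ωstar)) ∧
      (∀ ω : ℝ, 0 ≤ D ω ↔ (1 / 4 ≤ ω ∨ ω ≤ ωstar)) := by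
  intro D P
  have hD : ∀ ω : ℝ, D ω = (4 * ω - 1) * P ω := by
    intro ω
    simp only [D, P]
    ring
  have h1 : ∀ ω : ℝ, 1 / 4 ≤ ω → 0 ≤ D ω := by
    intro ω h
    have h0 : 0 ≤ 4 * ω - 1 := by linarith
    simp only [D]
    positivity
  have hc : ContinuousOn P (Set.Icc (-1.22) (-1.21)) := by
    simp only [P]
    fun_prop
  have hr : (0 : ℝ) ∈ Set.Ioo (P (-1.22)) (P (-1.21)) := by
    simp only [P]
    constructor <;> norm_num
  obtain ⟨r, ⟨hr1, hr2⟩, hr0⟩ := intermediate_value_Ioo (by norm_num) hc hr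
  norm_num at hr1 hr2
  -- the quadratic cofactor of `P` is positive
  have hQ : ∀ ω : ℝ, 0 < 4 * ω ^ 2 + (4 * r + 3) * ω + (4 * r ^ 2 + 3 * r - 2) := by
    intro ω
    nlinarith [sq_nonneg (8 * ω + 4 * r + 3), mul_pos (sub_pos.2 hr2) (sub_pos.2 hr2)]
  have hP : ∀ ω : ℝ,
      P ω = (ω - r) * (4 * ω ^ 2 + (4 * r + 3) * ω + (4 * r ^ 2 + 3 * r - 2)) := by
    intro ω
    have h : P ω - P r =
        (ω - r) * (4 * ω ^ 2 + (4 * r + 3) * ω + (4 * r ^ 2 + 3 * r - 2)) := by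
      simp only [P]
      ring
    rw [hr0] at h
    linarith
  have h3 : ∀ ω : ℝ, ω < 1 / 4 → (0 ≤ D ω ↔ ω ≤ r) := by
    intro ω h
    have hn : 4 * ω - 1 < 0 := by linarith
    rw [hD, hP]
    constructor
    · intro h0
      by_contra! hlt
      have := mul_neg_of_neg_of_pos hn (mul_pos (sub_pos.2 hlt) (hQ ω))
      linarith
    · intro hle
      exact mul_nonneg_of_nonpos_of_nonpos hn.le
        (mul_nonpos_of_nonpos_of_nonneg (sub_nonpos.2 hle) (hQ ω).le)
  refine ⟨hD, h1, r, ?_, ⟨by norm_num; exact hr1, by norm_num; exact hr2⟩, h3, ?_⟩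
  · intro ω
    rw [hP, mul_eq_zero, or_iff_left (hQ ω).ne', sub_eq_zero]
  · intro ω
    rcases le_or_gt (1 / 4) ω with h | h
    · exact ⟨fun _ => Or.inl h, fun _ => h1 ω h⟩
    · rw [h3 ω h, or_iff_right (not_le.2 h)]
end

section
/- Let ω = 1/(2 − 2^{1/3}) and set a₁ = ω/2, a₂ = (1−ω)/2, a₃ = (1−ω)/2, a₄ = ω/2 and b₁ = ω, b₂ = 1−2ω, b₃ = ω, b₄ = 0. Then these coefficients satisfy all the first-, second-, and third-order splitting conditions for p = 4: Σ a_j = Σ b_j = 1, Σ_{j=2}^{4} a_j(Σ_{k<j} b_k) = Σ_{j=1}^{4} b_j(Σ_{k≤j} a_k) = 1/2, and Σ_{j=2}^{4} a_j(Σ_{k<j} b_k)² = Σ_{j=1}^{4} b_j(Σ_{k≤j} a_k)² = 1/3. (These are the coefficients of the symmetric fourth-order scheme S_U^{(4)} = A^{(ω/2)Δt} B^{ωΔt} A^{((1−ω)/2)Δt} B^{(1−2ω)Δt} A^{((1−ω)/2)Δt} B^{ωΔt} A^{(ω/2)Δt}.) -/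
/-- The coefficients of the symmetric fourth-order scheme
`S_U^{(4)} = A^{(ω/2)Δt} B^{ωΔt} A^{((1−ω)/2)Δt} B^{(1−2ω)Δt}
A^{((1−ω)/2)Δt} B^{ωΔt} A^{(ω/2)Δt}` with `ω = 1/(2 − 2^{1/3})` satisfy all
the first-, second-, and third-order splitting conditions for `p = 4`. -/
theorem SU4_satisfies_third_order_conditions :
    let ω : ℝ := 1 / (2 - (2 : ℝ) ^ ((1 : ℝ) / 3))
    let a₁ : ℝ := ω / 2
    let a₂ : ℝ := (1 - ω) / 2
    let a₃ : ℝ := (1 - ω) / 2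
    let a₄ : ℝ := ω / 2
    let b₁ : ℝ := ω
    let b₂ : ℝ := 1 - 2 * ω
    let b₃ : ℝ := ω
    let b₄ : ℝ := 0
    (a₁ + a₂ + a₃ + a₄ = 1 ∧ b₁ + b₂ + b₃ + b₄ = 1) ∧
    (a₂ * b₁ + a₃ * (b₁ + b₂) + a₄ * (b₁ + b₂ + b₃) = 1 / 2 ∧
      b₁ * a₁ + b₂ * (a₁ + a₂) + b₃ * (a₁ + a₂ + a₃) +
        b₄ * (a₁ + a₂ + a₃ + a₄) = 1 / 2) ∧
    (a₂ * b₁ ^ 2 + a₃ * (b₁ + b₂) ^ 2 + a₄ * (b₁ + b₂ + b₃) ^ 2 = 1 / 3 ∧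
      b₁ * a₁ ^ 2 + b₂ * (a₁ + a₂) ^ 2 + b₃ * (a₁ + a₂ + a₃) ^ 2 +
        b₄ * (a₁ + a₂ + a₃ + a₄) ^ 2 = 1 / 3) := by
  intro ω a₁ a₂ a₃ a₄ b₁ b₂ b₃ b₄
  have hc : ((2 : ℝ) ^ ((1 : ℝ) / 3)) ^ 3 = 2 := by
    rw [← Real.rpow_natCast, ← Real.rpow_mul (by norm_num)]
    norm_num
  have hω : 1 - 6 * ω + 12 * ω ^ 2 - 6 * ω ^ 3 = 0 := by
    have hdef : ω = 1 / (2 - (2 : ℝ) ^ ((1 : ℝ) / 3)) := rfl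
    clear_value ω
    generalize (2 : ℝ) ^ ((1 : ℝ) / 3) = c at hc hdef
    have hne : 2 - c ≠ 0 := by
      intro h
      have h2 : c = 2 := by linarith
      rw [h2] at hc
      norm_num at hc
    have h1 : c * ω = 2 * ω - 1 := by
      rw [hdef]
      field_simp
      ring
    have h3 : c ^ 3 * ω ^ 3 = (2 * ω - 1) ^ 3 := by rw [← mul_pow, h1]
    rw [hc] at h3
    linarith
  simp only [a₁, a₂, a₃, a₄, b₁, b₂, b₃, b₄]
  clear_value ω
  refine ⟨⟨by ring, by ring⟩, ⟨by ring, by ring⟩, ?_, ?_⟩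
  · linear_combination hω / 6
  · linear_combination -hω / 12
end

section
/- Let ω = 1/(4 − 4^{1/3}) and set a₁ = ω/2, a₂ = ω, a₃ = (1−3ω)/2, a₄ = (1−3ω)/2, a₅ = ω, a₆ = ω/2 and b₁ = ω, b₂ = ω, b₃ = 1−4ω, b₄ = ω, b₅ = ω, b₆ = 0. Then these coefficients satisfy all the first-, second-, and third-order splitting conditions for p = 6: Σ a_j = Σ b_j = 1, Σ_{j=2}^{6} a_j(Σ_{k<j} b_k) = Σ_{j=1}^{6} b_j(Σ_{k≤j} a_k) = 1/2, and Σ_{j=2}^{6} a_j(Σ_{k<j} b_k)² = Σ_{j=1}^{6} b_j(Σ_{k≤j} a_k)² = 1/3. (These are the coefficients of the fourth-order scheme S_V^{(6)} = T^{ωΔt} T^{ωΔt} T^{(1−4ω)Δt} T^{ωΔt} T^{ωΔt} built from the second-order symmetric operator T^{Δt} = A^{Δt/2} B^{Δt} A^{Δt/2}.) -/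
/-- The coefficients of the fourth-order scheme
`S_V^{(6)} = T^{ωΔt} T^{ωΔt} T^{(1−4ω)Δt} T^{ωΔt} T^{ωΔt}` (built from the
second-order symmetric operator `T^{Δt} = A^{Δt/2} B^{Δt} A^{Δt/2}`) with
`ω = 1/(4 − 4^{1/3})` satisfy all the first-, second-, and third-order
splitting conditions for `p = 6`. -/
theorem SV6_satisfies_third_order_conditions :
    let ω : ℝ := 1 / (4 - (4 : ℝ) ^ ((1 : ℝ) / 3))
    let a₁ : ℝ := ω / 2
    let a₂ : ℝ := ω
    let a₃ : ℝ := (1 - 3 * ω) / 2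
    let a₄ : ℝ := (1 - 3 * ω) / 2
    let a₅ : ℝ := ω
    let a₆ : ℝ := ω / 2
    let b₁ : ℝ := ω
    let b₂ : ℝ := ω
    let b₃ : ℝ := 1 - 4 * ω
    let b₄ : ℝ := ω
    let b₅ : ℝ := ω
    let b₆ : ℝ := 0
    (a₁ + a₂ + a₃ + a₄ + a₅ + a₆ = 1 ∧
      b₁ + b₂ + b₃ + b₄ + b₅ + b₆ = 1) ∧
    (a₂ * b₁ + a₃ * (b₁ + b₂) + a₄ * (b₁ + b₂ + b₃) +
        a₅ * (b₁ + b₂ + b₃ + b₄) + a₆ * (b₁ + b₂ + b₃ + b₄ + b₅) = 1 / 2 ∧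
      b₁ * a₁ + b₂ * (a₁ + a₂) + b₃ * (a₁ + a₂ + a₃) +
        b₄ * (a₁ + a₂ + a₃ + a₄) + b₅ * (a₁ + a₂ + a₃ + a₄ + a₅) +
        b₆ * (a₁ + a₂ + a₃ + a₄ + a₅ + a₆) = 1 / 2) ∧
    (a₂ * b₁ ^ 2 + a₃ * (b₁ + b₂) ^ 2 + a₄ * (b₁ + b₂ + b₃) ^ 2 +
        a₅ * (b₁ + b₂ + b₃ + b₄) ^ 2 +
        a₆ * (b₁ + b₂ + b₃ + b₄ + b₅) ^ 2 = 1 / 3 ∧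
      b₁ * a₁ ^ 2 + b₂ * (a₁ + a₂) ^ 2 + b₃ * (a₁ + a₂ + a₃) ^ 2 +
        b₄ * (a₁ + a₂ + a₃ + a₄) ^ 2 +
        b₅ * (a₁ + a₂ + a₃ + a₄ + a₅) ^ 2 +
        b₆ * (a₁ + a₂ + a₃ + a₄ + a₅ + a₆) ^ 2 = 1 / 3) := by
  intro ω
  have key : 60 * ω ^ 3 - 48 * ω ^ 2 + 12 * ω - 1 = 0 := by
    have hc : ((4 : ℝ) ^ ((1 : ℝ) / 3)) ^ 3 = 4 := by
      rw [← Real.rpow_natCast, ← Real.rpow_mul (by norm_num)]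
      norm_num
    have hω : ω = 1 / (4 - (4 : ℝ) ^ ((1 : ℝ) / 3)) := rfl
    generalize (4 : ℝ) ^ ((1 : ℝ) / 3) = c at hc hω
    have hne : 4 - c ≠ 0 := by
      intro h
      have h4 : c = 4 := by linarith
      rw [h4] at hc
      norm_num at hc
    have h1 : c * ω = 4 * ω - 1 := by
      rw [hω]
      field_simp
      ring
    have h2 : (4 * ω - 1) ^ 3 = 4 * ω ^ 3 := by
      rw [← h1, mul_pow, hc]
    linear_combination h2
  clear_value ω
  refine ⟨⟨?_, ?_⟩, ⟨?_, ?_⟩, ?_, ?_⟩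
  · ring
  · ring
  · ring
  · ring
  · linear_combination (-1 / 6) * key
  · linear_combination (1 / 12) * key
end

section
/- Let a₁, a₂, a₃, b₁, b₂, b₃ be real numbers satisfying all five third-order splitting conditions for p = 3: a₁+a₂+a₃ = 1, b₁+b₂+b₃ = 1, a₂b₁ + a₃(b₁+b₂) = 1/2, a₂b₁² + a₃(b₁+b₂)² = 1/3, and b₁a₁² + b₂(a₁+a₂)² + b₃ = 1/3. Then at least one of a₁, a₂, a₃ is strictly negative and at least one of b₁, b₂, b₃ is strictly negative. That is, every third-order three-stage operator splitting scheme necessarily takes at least one backward time step in each of the two operators. -/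
/-- Every third-order three-stage operator splitting scheme necessarily takes
at least one backward time step in each of the two operators: if
`(a₁,a₂,a₃,b₁,b₂,b₃)` satisfies all five third-order `p = 3` conditions,
then at least one `aⱼ` and at least one `bⱼ` is strictly negative. -/
theorem thirdOrder_p3_needs_backward_steps (a₁ a₂ a₃ b₁ b₂ b₃ : ℝ)
    (h1a : a₁ + a₂ + a₃ = 1) (h1b : b₁ + b₂ + b₃ = 1)
    (h2 : a₂ * b₁ + a₃ * (b₁ + b₂) = 1 / 2)
    (h3a : a₂ * b₁ ^ 2 + a₃ * (b₁ + b₂) ^ 2 = 1 / 3)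
    (h3b : b₁ * a₁ ^ 2 + b₂ * (a₁ + a₂) ^ 2 + b₃ = 1 / 3) :
    (a₁ < 0 ∨ a₂ < 0 ∨ a₃ < 0) ∧ (b₁ < 0 ∨ b₂ < 0 ∨ b₃ < 0) := by
  obtain rfl : a₁ = 1 - a₂ - a₃ := by linarith
  obtain rfl : b₃ = 1 - b₁ - b₂ := by linarith
  constructor
  · by_contra! h
    obtain ⟨p1, p2, p3⟩ := h
    have key : (1 - a₂ - a₃) ^ 3 / 3
        + (a₂ * (b₁ - (1 - a₂ - a₃) - a₂ / 2) ^ 2 + a₂ ^ 3 / 12)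
        + (a₃ * (b₁ + b₂ - (1 - a₃) - a₃ / 2) ^ 2 + a₃ ^ 3 / 12) = 0 := by
      linear_combination h3a + h3b
    have q1 := pow_nonneg p1 3
    have q2 := pow_nonneg p2 3
    have q3 := pow_nonneg p3 3
    have r2 := mul_nonneg p2 (sq_nonneg (b₁ - (1 - a₂ - a₃) - a₂ / 2))
    have r3 := mul_nonneg p3 (sq_nonneg (b₁ + b₂ - (1 - a₃) - a₃ / 2))
    have e1 := pow_eq_zero_iff (three_ne_zero) |>.mp (show (1 - a₂ - a₃) ^ 3 = 0 by linarith)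
    have e2 := pow_eq_zero_iff (three_ne_zero) |>.mp (show a₂ ^ 3 = 0 by linarith)
    have e3 := pow_eq_zero_iff (three_ne_zero) |>.mp (show a₃ ^ 3 = 0 by linarith)
    linarith
  · by_contra! h
    obtain ⟨p1, p2, p3⟩ := h
    have key : (b₁ * (1 - a₂ - a₃ - b₁ / 2) ^ 2 + b₁ ^ 3 / 12)
        + (b₂ * (1 - a₃ - b₁ - b₂ / 2) ^ 2 + b₂ ^ 3 / 12)
        + (1 - b₁ - b₂) ^ 3 / 3 = 0 := by
      linear_combination h3a + h3b
    have q1 := pow_nonneg p1 3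
    have q2 := pow_nonneg p2 3
    have q3 := pow_nonneg p3 3
    have r1 := mul_nonneg p1 (sq_nonneg (1 - a₂ - a₃ - b₁ / 2))
    have r2 := mul_nonneg p2 (sq_nonneg (1 - a₃ - b₁ - b₂ / 2))
    have e1 := pow_eq_zero_iff (three_ne_zero) |>.mp (show b₁ ^ 3 = 0 by linarith)
    have e2 := pow_eq_zero_iff (three_ne_zero) |>.mp (show b₂ ^ 3 = 0 by linarith)
    have e3 := pow_eq_zero_iff (three_ne_zero) |>.mp (show (1 - b₁ - b₂) ^ 3 = 0 by linarith)
    linarith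
end
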